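/- arXiv:2102.10769 — 5 statements merged into one kernel-verified Lean document; each statement's English description precedes it below -/
import Mathlib

section
/- Simulation Lemma. Let S and A be finite nonempty types, s₀ ∈ S a fixed initial state, and H ∈ ℕ a horizon. For any two transition kernels P, P̂ : S × A → Δ(S), any two cost functions f, f̂ : S × A → [0,1], and any policy π : S → Δ(A), the value functions satisfy the identity V^π_{P;f} − V^π_{P̂;f̂} = ∑_{h=0}^{H−1} E_{(s,a)∼d^π_{P,h}}[ f(s,a) − f̂(s,a) + E_{s'∼P(s,a)} V^π_{P̂,f̂;h+1}(s') − E_{s'∼P̂(s,a)} V^π_{P̂,f̂;h+1}(s') ], and consequently V^π_{P;f} − V^π_{P̂;f̂} ≤ ∑_{h=0}^{H−1} E_{(s,a)∼d^π_{P,h}}[ f(s,a) − f̂(s,a) + (max_{h'≤H, s∈S} |V^π_{P̂,f̂;h'}(s)|) · ‖P(·|s,a) − P̂(·|s,a)‖₁ ]. -/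
open Finset

noncomputable section

/-- Value function with `k` steps to go, under transition kernel `P`,
policy `π` and cost `g`. -/
def Vsteps {S A : Type*} [Fintype S] [Fintype A]
    (P : S → A → S → ℝ) (π : S → A → ℝ) (g : S → A → ℝ) : ℕ → S → ℝ
  | 0, _ => 0
  | (k + 1), s => ∑ a, π s a * (g s a + ∑ s', P s a s' * Vsteps P π g k s')

/-- `Vh H P π g h s` is the value function `V^π_{P,g;h}(s)` for horizon `H`,
defined by the backward recursion `V_H = 0`,
`V_h(s) = E_{a∼π(s)}[g(s,a) + E_{s'∼P(s,a)} V_{h+1}(s')]`. -/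
def Vh {S A : Type*} [Fintype S] [Fintype A] (H : ℕ)
    (P : S → A → S → ℝ) (π : S → A → ℝ) (g : S → A → ℝ) (h : ℕ) (s : S) : ℝ :=
  Vsteps P π g (H - h) s

/-- Distribution over states at step `h`, starting at `s₀`, following `π` under `P`. -/
def stateDist {S A : Type*} [Fintype S] [Fintype A] [DecidableEq S]
    (s₀ : S) (P : S → A → S → ℝ) (π : S → A → ℝ) : ℕ → S → ℝ
  | 0, s => if s = s₀ then 1 else 0
  | (h + 1), s => ∑ s', ∑ a, stateDist s₀ P π h s' * π s' a * P s' a s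

/-- The step-`h` state-action occupancy measure
`d^π_{P,h}(s,a) = Pr(s_h = s, a_h = a | s₀, π, P)`. -/
def occ {S A : Type*} [Fintype S] [Fintype A] [DecidableEq S]
    (s₀ : S) (P : S → A → S → ℝ) (π : S → A → ℝ) (h : ℕ) (s : S) (a : A) : ℝ :=
  stateDist s₀ P π h s * π s a

/-!
The expected gap `E[V_h - V̂_h]` along the chain of `π` under `P` telescopes in `h`. One Bellman
step under each model gives `V_h - V̂_h = E_π[model error at step h + E_P[V_{h+1} - V̂_{h+1}]]`, and
in expectation the last term is the gap at step `h + 1`, because pushing the state distribution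
through `π` and `P` is averaging against the occupancy measure. The gap vanishes at `H`, and at `0`
it is the difference of values at `s₀`. The bound is Hölder's inequality for `ℓ₁` and `ℓ∞` in every
summand.
-/

theorem sum_mul_sub_sum_mul_le_mul_sum_abs {ι R : Type*} [CommRing R] [LinearOrder R]
    [IsStrictOrderedRing R] (t : Finset ι) (p q w : ι → R) {C : R} (hw : ∀ i ∈ t, |w i| ≤ C) :
    ∑ i ∈ t, p i * w i - ∑ i ∈ t, q i * w i ≤ C * ∑ i ∈ t, |p i - q i| := by
  rw [← sum_sub_distrib, mul_sum]
  refine sum_le_sum fun i hi => ?_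
  calc
    p i * w i - q i * w i = w i * (p i - q i) := by ring
    _ ≤ |w i| * |p i - q i| := (le_abs_self _).trans (abs_mul _ _).le
    _ ≤ C * |p i - q i| := by gcongr; exact hw i hi

section ModelError

variable {S A : Type*} [Fintype S]

/-- The error at `(s, a)` of the model `(Phat, fhat)` relative to `(P, f)`: the difference of their
one-step backups `f + P W` and `fhat + Phat W` of the same continuation value `W`. -/
def modelError (P Phat : S → A → S → ℝ) (f fhat : S → A → ℝ) (W : S → ℝ) (s : S) (a : A) : ℝ :=
  f s a - fhat s a + (∑ s', P s a s' * W s') - ∑ s', Phat s a s' * W s'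

theorem modelError_le_add_mul_sum_abs (P Phat : S → A → S → ℝ) (f fhat : S → A → ℝ) {W : S → ℝ}
    {C : ℝ} (hW : ∀ s, |W s| ≤ C) (s : S) (a : A) :
    modelError P Phat f fhat W s a ≤
      f s a - fhat s a + C * ∑ s', |P s a s' - Phat s a s'| := by
  rw [modelError, add_sub_assoc]
  gcongr
  exact sum_mul_sub_sum_mul_le_mul_sum_abs _ _ _ _ fun s' _ => hW s'

end ModelError

section ValueFunction

variable {S A : Type*} [Fintype S] [Fintype A]

theorem Vh_self (H : ℕ) (P : S → A → S → ℝ) (π g : S → A → ℝ) (s : S) :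
    Vh H P π g H s = 0 := by
  simp [Vh, Vsteps]

theorem Vh_of_lt {H h : ℕ} (hh : h < H) (P : S → A → S → ℝ) (π g : S → A → ℝ) (s : S) :
    Vh H P π g h s = ∑ a, π s a * (g s a + ∑ s', P s a s' * Vh H P π g (h + 1) s') := by
  have remaining_steps : H - h = H - (h + 1) + 1 := by lia
  simp only [Vh, remaining_steps, Vsteps]

theorem Vh_sub_Vh_of_lt {H h : ℕ} (hh : h < H) (P Phat : S → A → S → ℝ) (π f fhat : S → A → ℝ)
    (s : S) :
    Vh H P π f h s - Vh H Phat π fhat h s =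
      ∑ a, π s a * (modelError P Phat f fhat (Vh H Phat π fhat (h + 1)) s a +
        ∑ s', P s a s' * (Vh H P π f (h + 1) s' - Vh H Phat π fhat (h + 1) s')) := by
  rw [Vh_of_lt hh, Vh_of_lt hh, ← sum_sub_distrib]
  refine sum_congr rfl fun a _ => ?_
  simp only [modelError, mul_sub, sum_sub_distrib]
  ring

end ValueFunction

section Occupancy

variable {S A : Type*} [Fintype S] [Fintype A] [DecidableEq S]

theorem sum_stateDist_zero_mul (s₀ : S) (P : S → A → S → ℝ) (π : S → A → ℝ) (W : S → ℝ) :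
    ∑ s, stateDist s₀ P π 0 s * W s = W s₀ := by
  simp [stateDist]

theorem sum_stateDist_succ_mul (s₀ : S) (P : S → A → S → ℝ) (π : S → A → ℝ) (h : ℕ) (W : S → ℝ) :
    ∑ s, stateDist s₀ P π (h + 1) s * W s =
      ∑ s, ∑ a, occ s₀ P π h s a * ∑ s', P s a s' * W s' := by
  simp only [stateDist, occ, sum_mul, mul_sum, mul_assoc]
  rw [sum_comm]
  exact sum_congr rfl fun s _ => sum_comm

theorem stateDist_nonneg (s₀ : S) {P : S → A → S → ℝ} {π : S → A → ℝ}
    (hP : ∀ s a s', 0 ≤ P s a s') (hπ : ∀ s a, 0 ≤ π s a) (h : ℕ) (s : S) :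
    0 ≤ stateDist s₀ P π h s := by
  induction h generalizing s with
  | zero =>
    rw [stateDist]
    positivity
  | succ h ih =>
    exact sum_nonneg fun s' _ => sum_nonneg fun a _ =>
      mul_nonneg (mul_nonneg (ih s') (hπ s' a)) (hP s' a s)

theorem occ_nonneg (s₀ : S) {P : S → A → S → ℝ} {π : S → A → ℝ}
    (hP : ∀ s a s', 0 ≤ P s a s') (hπ : ∀ s a, 0 ≤ π s a) (h : ℕ) (s : S) (a : A) :
    0 ≤ occ s₀ P π h s a :=
  mul_nonneg (stateDist_nonneg s₀ hP hπ h s) (hπ s a)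

theorem sum_stateDist_mul_Vh_sub_Vh_of_lt {H h : ℕ} (hh : h < H) (s₀ : S)
    (P Phat : S → A → S → ℝ) (π f fhat : S → A → ℝ) :
    ∑ s, stateDist s₀ P π h s * (Vh H P π f h s - Vh H Phat π fhat h s) =
      ∑ s, ∑ a, occ s₀ P π h s a * modelError P Phat f fhat (Vh H Phat π fhat (h + 1)) s a +
        ∑ s, stateDist s₀ P π (h + 1) s *
          (Vh H P π f (h + 1) s - Vh H Phat π fhat (h + 1) s) := by
  rw [sum_stateDist_succ_mul]
  simp only [Vh_sub_Vh_of_lt hh, occ, mul_sum, mul_add, sum_add_distrib, mul_assoc]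

theorem Vh_zero_sub_Vh_zero_eq_sum_occ_mul_modelError (s₀ : S) (H : ℕ) (P Phat : S → A → S → ℝ)
    (π f fhat : S → A → ℝ) :
    Vh H P π f 0 s₀ - Vh H Phat π fhat 0 s₀ =
      ∑ h ∈ range H, ∑ s, ∑ a, occ s₀ P π h s a *
        modelError P Phat f fhat (Vh H Phat π fhat (h + 1)) s a := by
  let gap (h : ℕ) : ℝ :=
    ∑ s, stateDist s₀ P π h s * (Vh H P π f h s - Vh H Phat π fhat h s)
  have gap_zero : gap 0 = Vh H P π f 0 s₀ - Vh H Phat π fhat 0 s₀ :=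
    sum_stateDist_zero_mul s₀ P π _
  have gap_horizon : gap H = 0 := by simp [gap, Vh_self]
  calc
    Vh H P π f 0 s₀ - Vh H Phat π fhat 0 s₀ = gap 0 - gap H := by
      rw [gap_zero, gap_horizon, sub_zero]
    _ = ∑ h ∈ range H, (gap h - gap (h + 1)) := (sum_range_sub' gap H).symm
    _ = _ := sum_congr rfl fun h hh => sub_eq_of_eq_add <|
      sum_stateDist_mul_Vh_sub_Vh_of_lt (mem_range.1 hh) s₀ P Phat π f fhat

theorem Vh_zero_sub_Vh_zero_le_of_abs_Vh_le (s₀ : S) {H : ℕ} {P : S → A → S → ℝ}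
    (Phat : S → A → S → ℝ) {π : S → A → ℝ} (f fhat : S → A → ℝ)
    (hP : ∀ s a s', 0 ≤ P s a s') (hπ : ∀ s a, 0 ≤ π s a) {C : ℝ}
    (hC : ∀ h < H, ∀ s, |Vh H Phat π fhat (h + 1) s| ≤ C) :
    Vh H P π f 0 s₀ - Vh H Phat π fhat 0 s₀ ≤
      ∑ h ∈ range H, ∑ s, ∑ a, occ s₀ P π h s a *
        (f s a - fhat s a + C * ∑ s', |P s a s' - Phat s a s'|) := by
  rw [Vh_zero_sub_Vh_zero_eq_sum_occ_mul_modelError]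
  gcongr with h hh s _ a _
  · exact occ_nonneg s₀ hP hπ h s a
  · exact modelError_le_add_mul_sum_abs P Phat f fhat (hC h (mem_range.1 hh)) s a

end Occupancy

theorem simulation_lemma_general {S A : Type*} [Fintype S] [Fintype A] [DecidableEq S] [Nonempty S]
    (s₀ : S) (H : ℕ) (P Phat : S → A → S → ℝ) (hP : ∀ s a s', 0 ≤ P s a s')
    (f fhat : S → A → ℝ) (π : S → A → ℝ) (hπ : ∀ s a, 0 ≤ π s a) :
    (Vh H P π f 0 s₀ - Vh H Phat π fhat 0 s₀ =
      ∑ h ∈ range H, ∑ s, ∑ a, occ s₀ P π h s a *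
        (f s a - fhat s a
          + (∑ s', P s a s' * Vh H Phat π fhat (h + 1) s')
          - ∑ s', Phat s a s' * Vh H Phat π fhat (h + 1) s')) ∧
    (Vh H P π f 0 s₀ - Vh H Phat π fhat 0 s₀ ≤
      ∑ h ∈ range H, ∑ s, ∑ a, occ s₀ P π h s a *
        (f s a - fhat s a
          + ((range (H + 1)).sup' (by simp) fun h' =>
              (univ.sup' univ_nonempty fun s'' => |Vh H Phat π fhat h' s''|)) *
            ∑ s', |P s a s' - Phat s a s'|)) := by
  refine ⟨Vh_zero_sub_Vh_zero_eq_sum_occ_mul_modelError s₀ H P Phat π f fhat,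
    Vh_zero_sub_Vh_zero_le_of_abs_Vh_le s₀ Phat f fhat hP hπ fun h hh s => ?_⟩
  exact le_sup'_of_le _ (mem_range.2 (Nat.succ_lt_succ hh)) <|
    le_sup' (fun s => |Vh H Phat π fhat (h + 1) s|) (mem_univ s)

/-- **Simulation Lemma.** For any two transition kernels `P`, `P̂`, any two cost
functions `f`, `f̂` with values in `[0,1]`, and any policy `π`, the difference of
values decomposes along the occupancy measures of `π` under `P`, and is bounded
using the `ℓ₁` distance between the kernels. -/
theorem simulation_lemma {S A : Type*} [Fintype S] [Fintype A] [DecidableEq S]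
    [Nonempty S] [Nonempty A]
    (s₀ : S) (H : ℕ)
    (P Phat : S → A → S → ℝ)
    (hP : ∀ s a, (∀ s', 0 ≤ P s a s') ∧ ∑ s', P s a s' = 1)
    (hPhat : ∀ s a, (∀ s', 0 ≤ Phat s a s') ∧ ∑ s', Phat s a s' = 1)
    (f fhat : S → A → ℝ)
    (hf : ∀ s a, f s a ∈ Set.Icc (0 : ℝ) 1)
    (hfhat : ∀ s a, fhat s a ∈ Set.Icc (0 : ℝ) 1)
    (π : S → A → ℝ)
    (hπ : ∀ s, (∀ a, 0 ≤ π s a) ∧ ∑ a, π s a = 1) :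
    (Vh H P π f 0 s₀ - Vh H Phat π fhat 0 s₀ =
      ∑ h ∈ range H, ∑ s, ∑ a, occ s₀ P π h s a *
        (f s a - fhat s a
          + (∑ s', P s a s' * Vh H Phat π fhat (h + 1) s')
          - ∑ s', Phat s a s' * Vh H Phat π fhat (h + 1) s')) ∧
    (Vh H P π f 0 s₀ - Vh H Phat π fhat 0 s₀ ≤
      ∑ h ∈ range H, ∑ s, ∑ a, occ s₀ P π h s a *
        (f s a - fhat s a
          + ((range (H + 1)).sup' (by simp) fun h' =>
              (univ.sup' univ_nonempty fun s'' => |Vh H Phat π fhat h' s''|)) *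
            ∑ s', |P s a s' - Phat s a s'|)) :=
  simulation_lemma_general s₀ H P Phat (fun s a => (hP s a).1) f fhat π fun s => (hπ s).1

end
end

section
/- Optimism Lemma. Let S, A be finite nonempty sets, s₀ ∈ S, H ∈ ℕ with H ≥ 1, and let P*, P̂ : S × A → Δ(S) be transition kernels. Suppose there is an uncertainty measure σ : S × A → ℝ≥0 such that ‖P̂(·|s,a) − P*(·|s,a)‖₁ ≤ min{σ(s,a), 2} for all (s,a). Define the bonus b(s,a) := H · min{σ(s,a), 2}. Then for every cost function f : S → [0,1], letting f̃(s,a) := f(s) − b(s,a), and for every policy π : S → Δ(A), we have V^π_{P̂; f̃} ≤ V^π_{P*; f} (where on the right-hand side f is regarded as the cost (s,a) ↦ f(s)). -/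
/-!
Run the comparison backwards in time, with the true value function `V` as the candidate upper
bound. With `k` steps to go, `|V| ≤ k ≤ H`, so replacing the true transition probabilities by the
learned ones changes the expected continuation value by at most `H` times their `ℓ¹` distance,
which is exactly what the bonus pays for. Hence `V` is a supersolution of the Bellman recursion of
the learned model with cost `f - b`, and monotonicity of the Bellman operator does the rest.
-/

open Finset

noncomputable section

/-- The Bellman evaluation operator of the policy `π`: the expected cost of one step followed by
the continuation value `V`. Neither `P` nor `π` is assumed to be normalized. -/
def bellman {S A : Type*} [Fintype S] [Fintype A]
    (P : S → A → S → ℝ) (π : S → A → ℝ) (g : S → A → ℝ) (V : S → ℝ) (s : S) : ℝ :=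
  ∑ a, π s a * (g s a + ∑ s', P s a s' * V s')

lemma abs_sum_mul_le_sum_abs_mul {ι R : Type*} [CommRing R] [LinearOrder R] [IsStrictOrderedRing R]
    (t : Finset ι) (w : ι → R) {x : ι → R} {c : R} (hx : ∀ i ∈ t, |x i| ≤ c) :
    |∑ i ∈ t, w i * x i| ≤ (∑ i ∈ t, |w i|) * c :=
  calc |∑ i ∈ t, w i * x i|
      ≤ ∑ i ∈ t, |w i * x i| := abs_sum_le_sum_abs _ _
    _ ≤ ∑ i ∈ t, |w i| * c := sum_le_sum fun i hi => by
        rw [abs_mul]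
        exact mul_le_mul_of_nonneg_left (hx i hi) (abs_nonneg _)
    _ = (∑ i ∈ t, |w i|) * c := (sum_mul ..).symm

section Bellman

variable {S A : Type*} [Fintype S] [Fintype A] {P Q : S → A → S → ℝ} {π g g' b : S → A → ℝ}
  {V W : S → ℝ} {c : ℝ}

lemma vsteps_succ (k : ℕ) : Vsteps P π g (k + 1) = bellman P π g (Vsteps P π g k) := rfl

lemma bellman_le_bellman (hπ : ∀ s a, 0 ≤ π s a)
    (h : ∀ s a, g s a + ∑ s', P s a s' * V s' ≤ g' s a + ∑ s', Q s a s' * W s') :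
    bellman P π g V ≤ bellman Q π g' W := fun s =>
  sum_le_sum fun a _ => mul_le_mul_of_nonneg_left (h s a) (hπ s a)

lemma bellman_mono (hπ : ∀ s a, 0 ≤ π s a) (hP : ∀ s a s', 0 ≤ P s a s') :
    Monotone (bellman P π g) := fun _ _ hVW =>
  bellman_le_bellman hπ fun s a =>
    add_le_add_right (sum_le_sum fun s' _ => mul_le_mul_of_nonneg_left (hVW s') (hP s a s')) _

lemma abs_bellman_le {d : ℝ} (hπ : ∀ s, ∑ a, |π s a| ≤ 1) (hP : ∀ s a, ∑ s', |P s a s'| ≤ 1)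
    (hc : 0 ≤ c) (hd : 0 ≤ d) (hg : ∀ s a, |g s a| ≤ c) (hV : ∀ s, |V s| ≤ d) (s : S) :
    |bellman P π g V s| ≤ c + d := by
  have continuation_le (a : A) : |∑ s', P s a s' * V s'| ≤ d :=
    (abs_sum_mul_le_sum_abs_mul _ _ fun s' _ => hV s').trans (mul_le_of_le_one_left hd (hP s a))
  exact (abs_sum_mul_le_sum_abs_mul _ _ fun a _ =>
    (abs_add_le _ _).trans (add_le_add (hg s a) (continuation_le a))).trans
      (mul_le_of_le_one_left (add_nonneg hc hd) (hπ s))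

lemma abs_vsteps_le (hπ : ∀ s, ∑ a, |π s a| ≤ 1) (hP : ∀ s a, ∑ s', |P s a s'| ≤ 1)
    (hc : 0 ≤ c) (hg : ∀ s a, |g s a| ≤ c) (k : ℕ) (s : S) : |Vsteps P π g k s| ≤ k * c := by
  induction k generalizing s with
  | zero => simp [Vsteps]
  | succ k ih =>
    rw [vsteps_succ, Nat.cast_succ, add_one_mul, add_comm]
    exact abs_bellman_le hπ hP hc (by positivity) hg ih s

lemma vsteps_le_of_bellman_le (hπ : ∀ s a, 0 ≤ π s a) (hP : ∀ s a s', 0 ≤ P s a s')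
    {U : ℕ → S → ℝ} (hU₀ : 0 ≤ U 0) {n : ℕ} (hU : ∀ k < n, bellman P π g (U k) ≤ U (k + 1)) :
    Vsteps P π g n ≤ U n := by
  induction n with
  | zero => exact hU₀
  | succ n ih =>
    calc Vsteps P π g (n + 1)
        = bellman P π g (Vsteps P π g n) := vsteps_succ n
      _ ≤ bellman P π g (U n) := bellman_mono hπ hP (ih fun k hk => hU k (hk.trans n.lt_succ_self))
      _ ≤ U (n + 1) := hU n n.lt_succ_self

lemma bellman_sub_bonus_le (hπ : ∀ s a, 0 ≤ π s a) (hV : ∀ s, |V s| ≤ c)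
    (hb : ∀ s a, (∑ s', |P s a s' - Q s a s'|) * c ≤ b s a) :
    bellman P π (fun s a => g s a - b s a) V ≤ bellman Q π g V := by
  refine bellman_le_bellman hπ fun s a => ?_
  have model_error : ∑ s', P s a s' * V s' - ∑ s', Q s a s' * V s' ≤ b s a :=
    calc ∑ s', P s a s' * V s' - ∑ s', Q s a s' * V s'
        = ∑ s', (P s a s' - Q s a s') * V s' := by simp only [sub_mul, sum_sub_distrib]
      _ ≤ (∑ s', |P s a s' - Q s a s'|) * c :=
        (le_abs_self _).trans (abs_sum_mul_le_sum_abs_mul _ _ fun s' _ => hV s')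
      _ ≤ b s a := hb s a
  linarith

end Bellman

theorem optimism_lemma_general {S A : Type*} [Fintype S] [Fintype A] (H : ℕ)
    {Pstar Phat : S → A → S → ℝ} (hPstar : ∀ s a, ∑ s', |Pstar s a s'| ≤ 1)
    (hPhat : ∀ s a s', 0 ≤ Phat s a s') {c : ℝ} (hc : 0 ≤ c) {b : S → A → ℝ}
    (hb : ∀ s a, (∑ s', |Phat s a s' - Pstar s a s'|) * (H * c) ≤ b s a)
    {g : S → A → ℝ} (hg : ∀ s a, |g s a| ≤ c)
    {π : S → A → ℝ} (hπ : ∀ s a, 0 ≤ π s a) (hπ_sum : ∀ s, ∑ a, π s a ≤ 1) (h : ℕ) (s : S) :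
    Vh H Phat π (fun s a => g s a - b s a) h s ≤ Vh H Pstar π g h s := by
  have hπ_abs (s : S) : ∑ a, |π s a| ≤ 1 := by simpa only [abs_of_nonneg (hπ s _)] using hπ_sum s
  have value_bound {k : ℕ} (hk : k ≤ H) (s : S) : |Vsteps Pstar π g k s| ≤ H * c :=
    (abs_vsteps_le hπ_abs hPstar hc hg k s).trans (by gcongr)
  have supersolution (k : ℕ) (hk : k < H - h) :
      bellman Phat π (fun s a => g s a - b s a) (Vsteps Pstar π g k) ≤ Vsteps Pstar π g (k + 1) :=
    bellman_sub_bonus_le hπ (value_bound (hk.le.trans (H.sub_le h))) hb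
  exact vsteps_le_of_bellman_le hπ hPhat le_rfl supersolution s

/-- **Optimism Lemma.** If the learned model `P̂` is calibrated, i.e.
`‖P̂(·|s,a) − P*(·|s,a)‖₁ ≤ min{σ(s,a), 2}` for all `(s,a)`, and the bonus is
`b(s,a) = H·min{σ(s,a), 2}`, then for any state-dependent cost `f : S → [0,1]`,
the value of any policy `π` under `(P̂, f − b)` lower-bounds its value under
`(P*, f)`. -/
theorem optimism_lemma {S A : Type*} [Fintype S] [Fintype A]
    [Nonempty S] [Nonempty A]
    (s₀ : S) (H : ℕ) (hH : 1 ≤ H)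
    (Pstar Phat : S → A → S → ℝ)
    (hPstar : ∀ s a, (∀ s', 0 ≤ Pstar s a s') ∧ ∑ s', Pstar s a s' = 1)
    (hPhat : ∀ s a, (∀ s', 0 ≤ Phat s a s') ∧ ∑ s', Phat s a s' = 1)
    (σ : S → A → ℝ) (hσ : ∀ s a, 0 ≤ σ s a)
    (hcal : ∀ s a, ∑ s', |Phat s a s' - Pstar s a s'| ≤ min (σ s a) 2)
    (b : S → A → ℝ) (hb : ∀ s a, b s a = H * min (σ s a) 2)
    (f : S → ℝ) (hf : ∀ s, f s ∈ Set.Icc (0 : ℝ) 1)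
    (π : S → A → ℝ)
    (hπ : ∀ s, (∀ a, 0 ≤ π s a) ∧ ∑ a, π s a = 1) :
    Vh H Phat π (fun s a => f s - b s a) 0 s₀ ≤
      Vh H Pstar π (fun s _ => f s) 0 s₀ := by
  exact optimism_lemma_general H
    (fun s a => by simp only [abs_of_nonneg ((hPstar s a).1 _), (hPstar s a).2, le_refl])
    (fun s a => (hPhat s a).1) zero_le_one
    (fun s a => by rw [hb, mul_one, mul_comm]; gcongr; exact hcal s a)
    (fun s _ => (abs_of_nonneg (hf s).1).trans_le (hf s).2)
    (fun s => (hπ s).1) (fun s => (hπ s).2.le) 0 s₀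

end
end

section
/- Blocked elliptical potential lemma. Let d ≥ 1, λ > 0, T, H ∈ ℕ with T, H ≥ 1, and let φ_{t,h} ∈ ℝ^d for 0 ≤ t ≤ T−1, 0 ≤ h ≤ H−1 satisfy ‖φ_{t,h}‖₂ ≤ 1. Define the matrices Σ_t := λ I_d + ∑_{k=0}^{t−1} ∑_{h=0}^{H−1} φ_{k,h} φ_{k,h}ᵀ for 0 ≤ t ≤ T. Then ∑_{t=0}^{T−1} min{ ∑_{h=0}^{H−1} φ_{t,h}ᵀ Σ_t^{−1} φ_{t,h}, 1 } ≤ 2 ln( det(Σ_T) / det(λ I_d) ). -/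
open Finset Matrix

/-!
If `A` is positive definite and `B = Vᴴ V` is positive semidefinite, the matrix determinant lemma
gives `det (A + B) = det A * det (1 + V A⁻¹ Vᴴ)`. Diagonalizing the positive semidefinite matrix
`V A⁻¹ Vᴴ` and expanding the product of the factors `1 + eigenvalue` shows that the last determinant
is at least `1 + tr (V A⁻¹ Vᴴ) = 1 + tr (A⁻¹ B)`. With `A = Σ_t` and `B` the contribution of the
`t`-th block, `tr (A⁻¹ B)` is the `t`-th block sum of quadratic forms; since
`min x 1 ≤ 2 log (1 + x)`, its truncation at `1` is at most
`2 (log det Σ_{t+1} - log det Σ_t)`, and these bounds telescope.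
-/

open scoped ComplexOrder
open RCLike (re)

lemma min_le_two_mul_log_one_add {x : ℝ} (hx : 0 ≤ x) : min x 1 ≤ 2 * Real.log (1 + x) := by
  have hm : 0 ≤ min x 1 := le_min hx zero_le_one
  calc min x 1 ≤ 2 * (2 * min x 1 / (min x 1 + 2)) := by
        rw [← mul_div_assoc, le_div_iff₀ (by linarith)]
        nlinarith [min_le_right x 1]
    _ ≤ 2 * Real.log (1 + min x 1) := by
        gcongr
        exact Real.le_log_one_add_of_nonneg hm
    _ ≤ 2 * Real.log (1 + x) := by
        gcongr
        exact min_le_left x 1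

lemma one_add_sum_le_prod_one_add {ι R : Type*} [CommSemiring R] [PartialOrder R] [IsOrderedRing R]
    (s : Finset ι) {f : ι → R} (hf : ∀ i ∈ s, 0 ≤ f i) :
    1 + ∑ i ∈ s, f i ≤ ∏ i ∈ s, (1 + f i) := by
  induction s using Finset.cons_induction with
  | empty => simp
  | cons a s ha ih =>
    rw [forall_mem_cons] at hf
    have hs : 0 ≤ ∑ i ∈ s, f i := sum_nonneg hf.2
    calc 1 + ∑ i ∈ cons a s ha, f i
        = (1 + ∑ i ∈ s, f i) + f a := by rw [sum_cons, add_left_comm, add_comm]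
      _ ≤ (1 + ∑ i ∈ s, f i) + f a * (1 + ∑ i ∈ s, f i) := by
          gcongr
          exact le_mul_of_one_le_right hf.1 (le_add_of_nonneg_right hs)
      _ = (1 + f a) * (1 + ∑ i ∈ s, f i) := by ring
      _ ≤ (1 + f a) * ∏ i ∈ s, (1 + f i) := by
          gcongr
          · exact add_nonneg zero_le_one hf.1
          · exact ih hf.2
      _ = ∏ i ∈ cons a s ha, (1 + f i) := by rw [prod_cons]

lemma trace_mul_sum_vecMulVec {ι l m R : Type*} [CommSemiring R] [Fintype l] [Fintype m]
    (s : Finset ι) (M : Matrix l m R) (v : ι → m → R) (w : ι → l → R) :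
    (M * ∑ i ∈ s, vecMulVec (v i) (w i)).trace = ∑ i ∈ s, w i ⬝ᵥ (M *ᵥ v i) := by
  simp only [Matrix.mul_sum, mul_vecMulVec, trace_sum, trace_vecMulVec, dotProduct_comm]

variable {𝕜 n : Type*} [RCLike 𝕜] [Fintype n] {A B : Matrix n n 𝕜}

open scoped MatrixOrder Matrix.Norms.L2Operator in
lemma exists_eq_conjTranspose_mul_self (hB : B.PosSemidef) : ∃ V : Matrix n n 𝕜, B = Vᴴ * V := by
  classical exact CStarAlgebra.nonneg_iff_eq_star_mul_self.1 hB.nonneg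

lemma trace_mul_nonneg (hA : A.PosSemidef) (hB : B.PosSemidef) : 0 ≤ (A * B).trace := by
  obtain ⟨V, rfl⟩ := exists_eq_conjTranspose_mul_self hB
  rw [← mul_assoc, trace_mul_comm, ← mul_assoc]
  exact (hA.mul_mul_conjTranspose_same V).trace_nonneg

variable [DecidableEq n]

lemma det_one_add_eq_prod_one_add_eigenvalues (hB : B.IsHermitian) :
    (1 + B).det = ∏ i, (1 + (hB.eigenvalues i : 𝕜)) := by
  conv_lhs => rw [hB.spectral_theorem, Unitary.conjStarAlgAut_apply, det_one_add_mul_comm,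
    ← mul_assoc]
  rw [Unitary.coe_star_mul_self, one_mul, ← diagonal_one, diagonal_add, det_diagonal]
  rfl

lemma one_add_trace_le_det_one_add (hB : B.PosSemidef) : 1 + B.trace ≤ (1 + B).det := by
  rw [hB.1.trace_eq_sum_eigenvalues, det_one_add_eq_prod_one_add_eigenvalues hB.1]
  exact one_add_sum_le_prod_one_add _ fun i _ ↦ RCLike.ofReal_nonneg.2 (hB.eigenvalues_nonneg i)

lemma det_mul_one_add_trace_inv_mul_le_det_add (hA : A.PosDef) (hB : B.PosSemidef) :
    A.det * (1 + (A⁻¹ * B).trace) ≤ (A + B).det := by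
  obtain ⟨V, rfl⟩ := exists_eq_conjTranspose_mul_self hB
  have hV : (V * A⁻¹ * Vᴴ).PosSemidef := hA.inv.posSemidef.mul_mul_conjTranspose_same V
  calc A.det * (1 + (A⁻¹ * (Vᴴ * V)).trace) = A.det * (1 + (V * A⁻¹ * Vᴴ).trace) := by
        rw [← mul_assoc, trace_mul_comm, ← mul_assoc]
    _ ≤ A.det * (1 + V * A⁻¹ * Vᴴ).det :=
        mul_le_mul_of_nonneg_left (one_add_trace_le_det_one_add hV) hA.det_pos.le
    _ = (A + Vᴴ * V).det := (det_add_mul _ _ hA.det_pos.ne'.isUnit).symm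

lemma min_re_trace_inv_mul_le_two_mul_log_det_sub_log_det (hA : A.PosDef) (hB : B.PosSemidef) :
    min (re (A⁻¹ * B).trace) 1 ≤ 2 * (Real.log (re (A + B).det) - Real.log (re A.det)) := by
  have htr : 0 ≤ re (A⁻¹ * B).trace :=
    (RCLike.nonneg_iff.1 (trace_mul_nonneg hA.inv.posSemidef hB)).1
  obtain ⟨hdet, hdet_im⟩ := RCLike.pos_iff.1 hA.det_pos
  have hle : re A.det * (1 + re (A⁻¹ * B).trace) ≤ re (A + B).det := by
    simpa [RCLike.mul_re, hdet_im] using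
      (RCLike.le_iff_re_im.1 (det_mul_one_add_trace_inv_mul_le_det_add hA hB)).1
  calc min (re (A⁻¹ * B).trace) 1
      ≤ 2 * Real.log (1 + re (A⁻¹ * B).trace) := min_le_two_mul_log_one_add htr
    _ = 2 * (Real.log (re A.det * (1 + re (A⁻¹ * B).trace)) - Real.log (re A.det)) := by
        rw [Real.log_mul hdet.ne' (by positivity), add_sub_cancel_left]
    _ ≤ 2 * (Real.log (re (A + B).det) - Real.log (re A.det)) := by gcongr

lemma sum_min_re_trace_inv_mul_le_two_mul_log_det_div_det (hA : A.PosDef) {B : ℕ → Matrix n n 𝕜}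
    (hB : ∀ t, (B t).PosSemidef) (T : ℕ) :
    ∑ t ∈ range T, min (re ((A + ∑ k ∈ range t, B k)⁻¹ * B t).trace) 1 ≤
      2 * Real.log (re (A + ∑ k ∈ range T, B k).det / re A.det) := by
  let S (t : ℕ) : Matrix n n 𝕜 := A + ∑ k ∈ range t, B k
  let L (t : ℕ) : ℝ := Real.log (re (S t).det)
  have hS (t : ℕ) : (S t).PosDef := hA.add_posSemidef (posSemidef_sum _ fun k _ ↦ hB k)
  have hS_succ (t : ℕ) : S (t + 1) = S t + B t := by
    simp only [S, sum_range_succ, add_assoc]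
  have hdet (t : ℕ) : re (S t).det ≠ 0 := (RCLike.pos_iff.1 (hS t).det_pos).1.ne'
  have hS_zero : S 0 = A := by simp [S]
  calc ∑ t ∈ range T, min (re ((S t)⁻¹ * B t).trace) 1
      ≤ ∑ t ∈ range T, 2 * (L (t + 1) - L t) := by
        gcongr with t
        simpa only [L, hS_succ] using
          min_re_trace_inv_mul_le_two_mul_log_det_sub_log_det (hS t) (hB t)
    _ = 2 * (L T - L 0) := by rw [← mul_sum, sum_range_sub]
    _ = 2 * Real.log (re (S T).det / re A.det) := by
        rw [← hS_zero, Real.log_div (hdet T) (hdet 0)]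

theorem blocked_elliptical_potential_general {ι : Type*} (hA : A.PosDef) (s : ℕ → Finset ι)
    (φ : ℕ → ι → n → 𝕜) (Sig : ℕ → Matrix n n 𝕜)
    (hSig : ∀ t, Sig t = A + ∑ k ∈ range t, ∑ h ∈ s k, vecMulVec (φ k h) (star (φ k h))) (T : ℕ) :
    ∑ t ∈ range T, min (re (∑ h ∈ s t, star (φ t h) ⬝ᵥ ((Sig t)⁻¹ *ᵥ φ t h))) 1 ≤
      2 * Real.log (re (Sig T).det / re A.det) := by
  have hB (k : ℕ) : (∑ h ∈ s k, vecMulVec (φ k h) (star (φ k h))).PosSemidef :=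
    posSemidef_sum _ fun h _ ↦ posSemidef_vecMulVec_self_star (φ k h)
  simpa only [hSig, trace_mul_sum_vecMulVec] using
    sum_min_re_trace_inv_mul_le_two_mul_log_det_div_det hA hB T

/-- **Blocked elliptical potential lemma.** For feature vectors `φ_{t,h} ∈ ℝ^d`
of Euclidean norm at most 1 and `Σ_t = λ I + ∑_{k<t} ∑_{h<H} φ_{k,h} φ_{k,h}ᵀ`,
the sum over `t < T` of `min{∑_{h<H} φ_{t,h}ᵀ Σ_t⁻¹ φ_{t,h}, 1}` is at most
`2 ln(det Σ_T / det(λ I))`. -/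
theorem blocked_elliptical_potential
    (d : ℕ) (hd : 1 ≤ d) (lam : ℝ) (hlam : 0 < lam)
    (T H : ℕ) (hT : 1 ≤ T) (hH : 1 ≤ H)
    (φ : ℕ → ℕ → EuclideanSpace ℝ (Fin d))
    (hφ : ∀ t < T, ∀ h < H, ‖φ t h‖ ≤ 1)
    (Sig : ℕ → Matrix (Fin d) (Fin d) ℝ)
    (hSig : ∀ t, Sig t = lam • (1 : Matrix (Fin d) (Fin d) ℝ) +
      ∑ k ∈ range t, ∑ h ∈ range H, vecMulVec (φ k h) (φ k h)) :
    ∑ t ∈ range T, min (∑ h ∈ range H, φ t h ⬝ᵥ ((Sig t)⁻¹ *ᵥ φ t h)) 1 ≤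
      2 * Real.log ((Sig T).det / (lam • (1 : Matrix (Fin d) (Fin d) ℝ)).det) := by
  simpa using blocked_elliptical_potential_general (PosDef.one.smul hlam) (fun _ ↦ range H)
    (fun t h ↦ φ t h) Sig (by simpa using hSig) T
end

section
/- Log-determinant growth bound. Let d ≥ 1, λ > 0, M ∈ ℕ, and let φ_1, …, φ_M ∈ ℝ^d with ‖φ_i‖₂ ≤ 1 for all i. Then ln( det( λ I_d + ∑_{i=1}^M φ_i φ_iᵀ ) / det(λ I_d) ) ≤ d · ln( 1 + M / (d λ) ); in particular this quantity is at most d · ln(1 + M/λ). -/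
open Finset Matrix

/-!
Dividing out `λ`, the ratio of determinants is `det (1 + λ⁻¹ B)` with `B = ∑ᵢ φᵢφᵢᵀ` positive
semidefinite. By AM-GM on its eigenvalues, this is at most the `d`-th power of the mean eigenvalue
`1 + tr B / (d λ)`, and `tr B = ∑ᵢ ‖φᵢ‖² ≤ M`.
-/

theorem prod_le_arith_mean_pow_card {ι : Type*} {s : Finset ι} (hs : s.Nonempty) {z : ι → ℝ}
    (hz : ∀ i ∈ s, 0 ≤ z i) : ∏ i ∈ s, z i ≤ ((∑ i ∈ s, z i) / #s) ^ #s := by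
  have amgm : (∏ i ∈ s, z i) ^ (#s : ℝ)⁻¹ ≤ (∑ i ∈ s, z i) / #s := by
    simpa using Real.geom_mean_le_arith_mean s (fun _ ↦ 1) z (by simp) (by simpa using hs) hz
  calc ∏ i ∈ s, z i = ((∏ i ∈ s, z i) ^ (#s : ℝ)⁻¹) ^ #s :=
        (Real.rpow_inv_natCast_pow (prod_nonneg hz) hs.card_ne_zero).symm
    _ ≤ ((∑ i ∈ s, z i) / #s) ^ #s := by
        have := prod_nonneg hz
        gcongr

theorem det_smul_one_add_div_det_smul_one {F K n : Type*} [Field F] [Field K] [Algebra F K]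
    [Fintype n] [DecidableEq n] {c : F} (hc : c ≠ 0) (B : Matrix n n K) :
    (c • (1 : Matrix n n K) + B).det / (c • (1 : Matrix n n K)).det = (1 + c⁻¹ • B).det := by
  have factor : c • (1 : Matrix n n K) + B = c • (1 + c⁻¹ • B) := by
    rw [smul_add, smul_inv_smul₀ hc]
  have hdet : (c • (1 : Matrix n n K)).det ≠ 0 := by
    simp [det_smul_of_tower, hc]
  rw [div_eq_iff hdet, factor, det_smul_of_tower, det_smul_of_tower, det_one, mul_smul_one]

section RCLike

open scoped ComplexOrder

variable {𝕜 n ι : Type*} [RCLike 𝕜] [Fintype ι]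

theorem posSemidef_sum_vecMulVec_star [Finite n] (φ : ι → n → 𝕜) :
    (∑ i, vecMulVec (φ i) (star (φ i))).PosSemidef :=
  posSemidef_sum _ fun i _ ↦ posSemidef_vecMulVec_self_star (φ i)

variable [Fintype n]

theorem re_trace_sum_vecMulVec_star (φ : ι → EuclideanSpace 𝕜 n) :
    RCLike.re (∑ i, vecMulVec (φ i) (star (φ i : n → 𝕜))).trace = ∑ i, ‖φ i‖ ^ 2 := by
  simp only [trace_sum, trace_vecMulVec, map_sum, ← EuclideanSpace.inner_eq_star_dotProduct,
    inner_self_eq_norm_sq]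

variable [DecidableEq n] [Nonempty n]

theorem re_det_le_mean_trace_pow_card {A : Matrix n n 𝕜} (hA : A.PosSemidef) :
    RCLike.re A.det ≤ (RCLike.re A.trace / Fintype.card n) ^ Fintype.card n := by
  have hdet : RCLike.re A.det = ∏ i, hA.isHermitian.eigenvalues i := by
    rw [hA.isHermitian.det_eq_prod_eigenvalues, ← RCLike.ofReal_prod, RCLike.ofReal_re]
  have htrace : RCLike.re A.trace = ∑ i, hA.isHermitian.eigenvalues i := by
    rw [hA.isHermitian.trace_eq_sum_eigenvalues, ← RCLike.ofReal_sum, RCLike.ofReal_re]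
  rw [hdet, htrace]
  exact prod_le_arith_mean_pow_card univ_nonempty fun i _ ↦ hA.eigenvalues_nonneg i

theorem log_re_det_one_add_le {B : Matrix n n 𝕜} (hB : B.PosSemidef) :
    Real.log (RCLike.re (1 + B).det) ≤
      Fintype.card n * Real.log (1 + RCLike.re B.trace / Fintype.card n) := by
  have hpos : (1 + B).PosDef := PosDef.one.add_posSemidef hB
  have hmean : RCLike.re (1 + B).trace / Fintype.card n =
      1 + RCLike.re B.trace / Fintype.card n := by
    simp [trace_add, add_div]
  rw [← Real.log_pow, ← hmean]
  exact Real.log_le_log (RCLike.pos_iff.mp hpos.det_pos).1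
    (re_det_le_mean_trace_pow_card hpos.posSemidef)

theorem log_re_det_smul_one_add_div_le {lam : ℝ} (hlam : 0 < lam) {B : Matrix n n 𝕜}
    (hB : B.PosSemidef) :
    Real.log (RCLike.re ((lam • (1 : Matrix n n 𝕜) + B).det / (lam • (1 : Matrix n n 𝕜)).det)) ≤
      Fintype.card n * Real.log (1 + RCLike.re B.trace / (Fintype.card n * lam)) := by
  have htrace : RCLike.re (lam⁻¹ • B).trace / Fintype.card n =
      RCLike.re B.trace / (Fintype.card n * lam) := by
    rw [trace_smul, RCLike.smul_re]
    field_simp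
  rw [det_smul_one_add_div_det_smul_one hlam.ne', ← htrace]
  exact log_re_det_one_add_le (hB.smul (inv_nonneg.mpr hlam.le))

theorem logdet_growth_bound_general {lam : ℝ} (hlam : 0 < lam) {S : ℝ}
    (φ : ι → EuclideanSpace 𝕜 n) (hφ : ∑ i, ‖φ i‖ ^ 2 ≤ S) :
    Real.log (RCLike.re ((lam • (1 : Matrix n n 𝕜) +
          ∑ i, vecMulVec (φ i) (star (φ i : n → 𝕜))).det /
        (lam • (1 : Matrix n n 𝕜)).det)) ≤
      Fintype.card n * Real.log (1 + S / (Fintype.card n * lam)) ∧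
    Fintype.card n * Real.log (1 + S / (Fintype.card n * lam)) ≤
      Fintype.card n * Real.log (1 + S / lam) := by
  have hsum : 0 ≤ ∑ i, ‖φ i‖ ^ 2 := by positivity
  have hS : 0 ≤ S := hsum.trans hφ
  have hcard : (1 : ℝ) ≤ Fintype.card n := mod_cast Fintype.card_pos
  constructor
  · calc
      _ ≤ Fintype.card n * Real.log (1 + (∑ i, ‖φ i‖ ^ 2) / (Fintype.card n * lam)) := by
        rw [← re_trace_sum_vecMulVec_star]
        exact log_re_det_smul_one_add_div_le hlam (posSemidef_sum_vecMulVec_star fun i ↦ φ i)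
      _ ≤ Fintype.card n * Real.log (1 + S / (Fintype.card n * lam)) := by gcongr
  · gcongr
    exact le_mul_of_one_le_left hlam.le hcard

end RCLike

/-- **Log-determinant growth bound.** For `M` vectors `φ_i ∈ ℝ^d` of Euclidean
norm at most 1 and `λ > 0`,
`ln(det(λ I + ∑ᵢ φᵢφᵢᵀ)/det(λ I)) ≤ d·ln(1 + M/(dλ)) ≤ d·ln(1 + M/λ)`. -/
theorem logdet_growth_bound
    (d : ℕ) (hd : 1 ≤ d) (lam : ℝ) (hlam : 0 < lam)
    (M : ℕ) (φ : Fin M → EuclideanSpace ℝ (Fin d))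
    (hφ : ∀ i, ‖φ i‖ ≤ 1) :
    Real.log ((lam • (1 : Matrix (Fin d) (Fin d) ℝ) +
          ∑ i, vecMulVec (φ i) (φ i)).det /
        (lam • (1 : Matrix (Fin d) (Fin d) ℝ)).det) ≤
      d * Real.log (1 + M / (d * lam)) ∧
    (d : ℝ) * Real.log (1 + M / (d * lam)) ≤ d * Real.log (1 + M / lam) := by
  have : Nonempty (Fin d) := ⟨⟨0, hd⟩⟩
  have hsum : ∑ i, ‖φ i‖ ^ 2 ≤ (M : ℝ) := by
    simpa using sum_le_card_nsmul univ _ 1 fun i _ ↦ pow_le_one₀ (norm_nonneg _) (hφ i)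
  simpa using logdet_growth_bound_general hlam φ hsum
end

section
/- Optimistic min-max imitation step (intermediate claim in the proof of the main theorem). Consider a finite-horizon MDP with finite S, A, initial state s₀, horizon H ≥ 1, and true transition kernel P*. Let P̂ be another transition kernel, let F be a finite set of functions f : S → [0,1] containing the true cost c, let Π be a set of policies containing the expert policy π^e, and let b : S × A → ℝ≥0 be a bonus satisfying the optimism property at π^e: for every f ∈ F, E_{(s,a)∼d^{π^e}_{P̂}}[ f(s) − b(s,a) ] ≤ E_{s∼d^{π^e}_{P*}}[ f(s) ]. Let Ê : F → ℝ be an estimator with | E_{s∼d^{π^e}_{P*}}[f(s)] − Ê(f) | ≤ ε for all f ∈ F. If π̂ ∈ argmin_{π∈Π} max_{f∈F} [ E_{(s,a)∼d^{π}_{P̂}}[ f(s) − b(s,a) ] − Ê(f) ], then E_{(s,a)∼d^{π̂}_{P̂}}[ c(s) − b(s,a) ] ≤ E_{s∼d^{π^e}_{P*}}[ c(s) ] + 2ε. -/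
open Finset

noncomputable section

/-- The average state-action occupancy measure
`d^π_P(s,a) = (1/H) ∑_{h<H} d^π_{P,h}(s,a)`. -/
def davg {S A : Type*} [Fintype S] [Fintype A] [DecidableEq S]
    (s₀ : S) (P : S → A → S → ℝ) (π : S → A → ℝ) (H : ℕ) (s : S) (a : A) : ℝ :=
  (1 / H) * ∑ h ∈ range H, occ s₀ P π h s a

theorem coe_sup'_eq_biSup {ι : Type*} (t : Finset ι) (ht : t.Nonempty) (g : ι → ℝ) :
    ((t.sup' ht g : ℝ) : EReal) = ⨆ i ∈ t, (g i : EReal) := by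
  rw [apply_sup'_eq_sup'_comp ht Real.toEReal fun _ _ ↦ EReal.coe_strictMono.monotone.map_max,
    sup'_eq_sup, Finset.sup_eq_iSup]
  rfl

theorem isMinOn_biSup_coe_iff_sup' {X ι : Type*} {s : Set X} {t : Finset ι} (ht : t.Nonempty)
    {g : X → ι → ℝ} {a : X} :
    IsMinOn (fun x ↦ ⨆ i ∈ (t : Set ι), (g x i : EReal)) s a ↔
      ∀ x ∈ s, t.sup' ht (g a) ≤ t.sup' ht (g x) := by
  simp only [isMinOn_iff, mem_coe, ← coe_sup'_eq_biSup t ht, EReal.coe_le_coe_iff]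

theorem le_of_isMinOn_biSup {X ι α : Type*} [CompleteLattice α] {s : Set X} {t : Set ι}
    {g : X → ι → α} {a x : X} {i : ι} {r : α} (hmin : IsMinOn (fun x ↦ ⨆ i ∈ t, g x i) s a)
    (hx : x ∈ s) (hr : ∀ j ∈ t, g x j ≤ r) (hi : i ∈ t) : g a i ≤ r :=
  calc g a i ≤ ⨆ j ∈ t, g a j := le_biSup (g a) hi
    _ ≤ ⨆ j ∈ t, g x j := hmin hx
    _ ≤ r := iSup₂_le hr

/-- For an MDP, `modelValue π f` is the bonus-penalised cost `E_{d^π_{P̂}}[f - b]` of the policy `π`.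
The supremum over `F` is taken in `EReal`: in `ℝ` it would be the junk value `0` for an
objective unbounded above on `F`. -/
theorem optimistic_minmax_step_general {X ι : Type*} {Pi : Set X} {F : Set ι}
    {modelValue : X → ι → ℝ} {expertValue estimate : ι → ℝ} {ε : ℝ} {xe xhat : X} {c : ι}
    (hxe : xe ∈ Pi) (hc : c ∈ F)
    (hoptimism : ∀ f ∈ F, modelValue xe f ≤ expertValue f)
    (hestimate : ∀ f ∈ F, |expertValue f - estimate f| ≤ ε)
    (hmin : IsMinOn (fun x ↦ ⨆ f ∈ F, ((modelValue x f - estimate f : ℝ) : EReal)) Pi xhat) :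
    modelValue xhat c ≤ expertValue c + 2 * ε := by
  have expert_objective_le : ∀ f ∈ F, modelValue xe f - estimate f ≤ ε := fun f hf ↦
    (sub_le_sub_right (hoptimism f hf) _).trans (le_of_abs_le (hestimate f hf))
  have minimizer_objective_le : modelValue xhat c - estimate c ≤ ε :=
    EReal.coe_le_coe_iff.1 <| le_of_isMinOn_biSup
      (g := fun x f ↦ ((modelValue x f - estimate f : ℝ) : EReal)) hmin hxe
      (fun f hf ↦ EReal.coe_le_coe (expert_objective_le f hf)) hc
  have estimate_le : estimate c ≤ expertValue c + ε := by
    linarith [neg_le_of_abs_le (hestimate c hc)]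
  linarith

/-- **Optimistic min-max imitation step.** If the bonus `b` is optimistic at the
expert policy, the estimator `Ê` is `ε`-accurate on the class `F ∋ c`, and `π̂`
minimizes over `Π ∋ π^e` the optimistic min-max objective, then the optimistic
cost of `π̂` in the model `P̂` is at most the expert's expected cost plus `2ε`. -/
theorem optimistic_minmax_step
    {S A : Type*} [Fintype S] [Fintype A] [DecidableEq S]
    [Nonempty S] [Nonempty A]
    (s₀ : S) (H : ℕ) (hH : 1 ≤ H)
    (Pstar Phat : S → A → S → ℝ)
    (hPstar : ∀ s a, (∀ s', 0 ≤ Pstar s a s') ∧ ∑ s', Pstar s a s' = 1)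
    (hPhat : ∀ s a, (∀ s', 0 ≤ Phat s a s') ∧ ∑ s', Phat s a s' = 1)
    (Pi : Set (S → A → ℝ))
    (hPi : ∀ π ∈ Pi, ∀ s, (∀ a, 0 ≤ π s a) ∧ ∑ a, π s a = 1)
    (πe : S → A → ℝ) (hπe : πe ∈ Pi)
    (F : Finset (S → ℝ))
    (hFbdd : ∀ f ∈ F, ∀ s, f s ∈ Set.Icc (0 : ℝ) 1)
    (c : S → ℝ) (hcF : c ∈ F)
    (b : S → A → ℝ) (hb : ∀ s a, 0 ≤ b s a)
    (hoptimism : ∀ f ∈ F,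
      (∑ s, ∑ a, davg s₀ Phat πe H s a * (f s - b s a)) ≤
        ∑ s, ∑ a, davg s₀ Pstar πe H s a * f s)
    (Ehat : (S → ℝ) → ℝ) (ε : ℝ)
    (hEhat : ∀ f ∈ F,
      |(∑ s, ∑ a, davg s₀ Pstar πe H s a * f s) - Ehat f| ≤ ε)
    (πhat : S → A → ℝ) (hπhat : πhat ∈ Pi)
    (hmin : ∀ π ∈ Pi,
      (F.sup' ⟨c, hcF⟩ fun f =>
          (∑ s, ∑ a, davg s₀ Phat πhat H s a * (f s - b s a)) - Ehat f) ≤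
        F.sup' ⟨c, hcF⟩ fun f =>
          (∑ s, ∑ a, davg s₀ Phat π H s a * (f s - b s a)) - Ehat f) :
    (∑ s, ∑ a, davg s₀ Phat πhat H s a * (c s - b s a)) ≤
      (∑ s, ∑ a, davg s₀ Pstar πe H s a * c s) + 2 * ε := by
  exact optimistic_minmax_step_general (F := F)
    (modelValue := fun π (f : S → ℝ) ↦ ∑ s, ∑ a, davg s₀ Phat π H s a * (f s - b s a))
    hπe hcF hoptimism hEhat (by rwa [isMinOn_biSup_coe_iff_sup' ⟨c, hcF⟩])

end
end
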